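/- arXiv:0802.2928 — 3 statements merged into one kernel-verified Lean document; each statement's English description precedes it below -/
import Mathlib

section
/- For every pair of positive integers k and h, there exists an integer φ(k,h) such that every asymptotic basis for ℕ₀ of order h contains at most φ(k,h) essential subsets of cardinality at most k. -/
/-- The `h`-fold sumset of `A ⊆ ℕ`: all sums of `h`-tuples of elements of `A`. -/
def Sumset (A : Set ℕ) (h : ℕ) : Set ℕ :=
  {n | ∃ l : List ℕ, l.length = h ∧ (∀ x ∈ l, x ∈ A) ∧ l.sum = n}

/-- `A` is an asymptotic basis for `ℕ` of order `h`. -/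
def IsBasisOfOrder (A : Set ℕ) (h : ℕ) : Prop :=
  0 ∈ A ∧ 1 ≤ h ∧ (Sumset A h)ᶜ.Finite

/-- `A` is an asymptotic basis for `ℕ` of some order. -/
def IsBasis (A : Set ℕ) : Prop := ∃ h, IsBasisOfOrder A h

/-- `P` is an essentiality of `A`: `A \ P` is not an asymptotic basis of any order,
and `P` is minimal (w.r.t. inclusion) among subsets of `A` with this property. -/
def IsEssentiality (A P : Set ℕ) : Prop :=
  P ⊆ A ∧ ¬ IsBasis (A \ P) ∧ ∀ Q ⊆ P, ¬ IsBasis (A \ Q) → Q = P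

/-- An essential subset is a finite essentiality. -/
def IsEssentialSubset (A P : Set ℕ) : Prop :=
  IsEssentiality A P ∧ P.Finite

/-!
If `F` is finite and `0 ∈ A \ F`, then `A ⊆ (F ∪ {0}) + (A \ F)`, so `hA` is contained in a finite
set plus `h(A \ F)`. When `A \ F` has gcd `1`, a translate of that finite set lies in some
`r(A \ F)`, and `A \ F` inherits the basis property from `A`. A finite `P ∌ 0` is therefore
essential only because a prime `p` divides all of `A \ P`, and minimality gives
`P = {x ∈ A | ¬ p ∣ x}`.

Given `s` such subsets of size at most `k`, their primes are distinct and have product `m ≥ 2 ^ s`.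
Modulo `m` the elements of `A` outside the union `U` of these subsets vanish, while `hA` meets every
residue class. So `h(U ∪ {0})` covers `ℤ/mℤ`, and `2 ^ s ≤ m ≤ (k * s + 1) ^ h` bounds `s`.
-/

open Filter
open scoped Pointwise

section Nsmul

variable {M : Type*}

lemma exists_mem_nsmul_of_mem_closure [AddMonoid M] {C : Set M} {x : M}
    (hx : x ∈ AddSubmonoid.closure C) : ∃ r : ℕ, x ∈ r • C := by
  induction hx using AddSubmonoid.closure_induction with
  | mem x hx => exact ⟨1, by rwa [one_nsmul]⟩
  | zero => exact ⟨0, by rw [zero_nsmul]; exact Set.zero_mem_zero⟩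
  | add x y _ _ hx hy =>
    obtain ⟨r, hr⟩ := hx
    obtain ⟨s, hs⟩ := hy
    exact ⟨r + s, by rw [add_nsmul]; exact Set.add_mem_add hr hs⟩

lemma exists_subset_nsmul_of_subset_closure [AddMonoid M] {C S : Set M} (hC : 0 ∈ C)
    (hS : S.Finite) (hSC : S ⊆ AddSubmonoid.closure C) : ∃ r : ℕ, S ⊆ r • C := by
  have eventually_mem : ∀ x ∈ S, ∀ᶠ r : ℕ in atTop, x ∈ r • C := fun x hx ↦ by
    obtain ⟨r, hr⟩ := exists_mem_nsmul_of_mem_closure (hSC hx)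
    exact eventually_atTop.2 ⟨r, fun s hrs ↦ Set.nsmul_right_monotone hC hrs hr⟩
  exact ((eventually_all_finite hS).2 eventually_mem).exists

lemma finite_nsmul [AddMonoid M] {S : Set M} (hS : S.Finite) (n : ℕ) : (n • S).Finite := by
  induction n with
  | zero => rw [zero_nsmul]; exact Set.finite_zero
  | succ n ih => rw [succ_nsmul]; exact ih.add hS

lemma nsmul_subset_nsmul_insert_zero_add_nsmul_sdiff [AddCommMonoid M] {A F : Set M}
    (h0 : 0 ∈ A \ F) (n : ℕ) : n • A ⊆ n • insert 0 F + n • (A \ F) := by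
  rw [← nsmul_add]
  refine Set.nsmul_subset_nsmul_left fun x hx ↦ ?_
  by_cases hxF : x ∈ F
  · exact Set.mem_add.2 ⟨x, .inr hxF, 0, h0, add_zero x⟩
  · exact Set.mem_add.2 ⟨0, .inl rfl, x, ⟨hx, hxF⟩, zero_add x⟩

end Nsmul

lemma sumset_eq_nsmul (A : Set ℕ) (h : ℕ) : Sumset A h = h • A := by
  ext n
  rw [Set.mem_nsmul]
  constructor
  · rintro ⟨l, rfl, hl, rfl⟩
    exact ⟨fun i ↦ ⟨l.get i, hl _ (l.get_mem i)⟩, by rw [List.ofFn_get]⟩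
  · rintro ⟨f, rfl⟩
    refine ⟨List.ofFn fun i ↦ (f i : ℕ), List.length_ofFn, fun x hx ↦ ?_, rfl⟩
    obtain ⟨i, rfl⟩ := List.mem_ofFn.1 hx
    exact (f i).2

lemma isBasisOfOrder_iff_eventually_mem_nsmul {A : Set ℕ} {h : ℕ} :
    IsBasisOfOrder A h ↔ 0 ∈ A ∧ 1 ≤ h ∧ ∀ᶠ n in atTop, n ∈ h • A := by
  rw [IsBasisOfOrder, sumset_eq_nsmul, ← Nat.cofinite_eq_atTop, eventually_cofinite]
  rfl

lemma IsBasisOfOrder.eventually_mem_nsmul {A : Set ℕ} {h : ℕ} (hA : IsBasisOfOrder A h) :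
    ∀ᶠ n in atTop, n ∈ h • A :=
  (isBasisOfOrder_iff_eventually_mem_nsmul.1 hA).2.2

lemma IsBasis.setGcd_eq_one {A : Set ℕ} (hA : IsBasis A) : Nat.setGcd A = 1 := by
  obtain ⟨h, hA⟩ := hA
  have eventually_dvd : ∀ᶠ n in atTop, Nat.setGcd A ∣ n :=
    hA.eventually_mem_nsmul.mono fun n hn ↦
      Nat.setGcd_dvd_of_mem_closure (AddSubmonoid.nsmul_subset AddSubmonoid.subset_closure hn)
  obtain ⟨N, hN⟩ := eventually_atTop.1 eventually_dvd
  exact Nat.dvd_one.1 ((Nat.dvd_add_right (hN N le_rfl)).1 (hN (N + 1) N.le_succ))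

lemma IsBasis.sdiff_of_setGcd_eq_one {A F : Set ℕ} (hA : IsBasis A) (hF : F.Finite)
    (h0 : 0 ∉ F) (hgcd : Nat.setGcd (A \ F) = 1) : IsBasis (A \ F) := by
  obtain ⟨h, hA⟩ := hA
  have h0C : 0 ∈ A \ F := ⟨hA.1, h0⟩
  obtain ⟨T, hT⟩ := Nat.exists_mem_closure_of_ge (A \ F)
  obtain ⟨r, hr⟩ : ∃ r : ℕ, {T} + h • insert 0 F ⊆ r • (A \ F) := by
    refine exists_subset_nsmul_of_subset_closure h0C
      ((Set.finite_singleton T).add (finite_nsmul (hF.insert 0) h)) ?_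
    rintro _ ⟨_, rfl, y, -, rfl⟩
    exact hT _ (Nat.le_add_right _ y) (hgcd ▸ one_dvd _)
  refine ⟨r + h, isBasisOfOrder_iff_eventually_mem_nsmul.2 ⟨h0C, le_add_left hA.2.1, ?_⟩⟩
  filter_upwards [eventually_ge_atTop T,
    (tendsto_sub_atTop_nat T).eventually hA.eventually_mem_nsmul] with n hTn hn
  obtain ⟨f, hf, c, hc, hfc⟩ := nsmul_subset_nsmul_insert_zero_add_nsmul_sdiff h0C h hn
  have eq_add : n = T + f + c := by dsimp only at hfc; omega
  rw [eq_add, add_nsmul]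
  exact Set.add_mem_add (hr (Set.add_mem_add rfl hf)) hc

lemma IsEssentiality.eq_singleton_zero {A P : Set ℕ} (hP : IsEssentiality A P) (h0 : 0 ∈ P) :
    P = {0} := by
  -- `IsBasis` requires `0` to be an element, so removing `0` alone already destroys it.
  have not_isBasis : ¬ IsBasis (A \ {0}) := fun ⟨_, hmem, _⟩ ↦ hmem.2 rfl
  exact (hP.2.2 {0} (Set.singleton_subset_iff.2 h0) not_isBasis).symm

lemma IsEssentialSubset.exists_prime_eq_setOf_not_dvd {A P : Set ℕ} (hA : IsBasis A)
    (hP : IsEssentialSubset A P) (h0 : 0 ∉ P) :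
    ∃ p : ℕ, p.Prime ∧ P = {x ∈ A | ¬ p ∣ x} := by
  obtain ⟨⟨-, not_isBasis, minimal⟩, hfin⟩ := hP
  obtain ⟨p, hp, hpgcd⟩ := Nat.exists_prime_and_dvd
    fun hgcd ↦ not_isBasis (hA.sdiff_of_setGcd_eq_one hfin h0 hgcd)
  have subset : {x ∈ A | ¬ p ∣ x} ⊆ P := fun x ⟨hxA, hpx⟩ ↦ by
    by_contra hxP
    exact hpx (Nat.dvd_setGcd_iff.1 hpgcd x ⟨hxA, hxP⟩)
  have not_isBasis_multiples : ¬ IsBasis (A \ {x ∈ A | ¬ p ∣ x}) := fun hbasis ↦ by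
    refine hp.ne_one (Nat.dvd_one.1 (hbasis.setGcd_eq_one ▸ Nat.dvd_setGcd_iff.2 ?_))
    exact fun x ⟨hxA, hx⟩ ↦ by_contra fun hpx ↦ hx ⟨hxA, hpx⟩
  exact ⟨p, hp, (minimal _ subset not_isBasis_multiples).symm⟩

namespace IsBasisOfOrder

variable {A : Set ℕ} {h : ℕ}

lemma nsmul_image_castAddMonoidHom_eq_univ (hA : IsBasisOfOrder A h) (m : ℕ) [NeZero m] :
    h • (Nat.castAddMonoidHom (ZMod m) '' A) = Set.univ := by
  rw [← Set.image_nsmul]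
  refine Set.eq_univ_of_forall fun c ↦ ?_
  obtain ⟨N, hN⟩ := eventually_atTop.1 hA.eventually_mem_nsmul
  have le_representative : N ≤ c.val + m * N :=
    le_add_left (Nat.le_mul_of_pos_left N (NeZero.pos m))
  exact ⟨c.val + m * N, hN _ le_representative, by simp⟩

lemma modulus_le_ncard_pow (hA : IsBasisOfOrder A h) {m : ℕ} {E : Set ℕ} (hE : E.Finite)
    (hcover : ∀ x ∈ A, ∃ e ∈ E, x ≡ e [MOD m]) : m ≤ E.ncard ^ h := by
  classical
  rcases m.eq_zero_or_pos with rfl | hm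
  · exact Nat.zero_le _
  have : NeZero m := ⟨hm.ne'⟩
  lift E to Finset ℕ using hE
  let residues : Finset (ZMod m) := E.image (Nat.castAddMonoidHom (ZMod m))
  have image_subset : Nat.castAddMonoidHom (ZMod m) '' A ⊆ residues := by
    rintro _ ⟨x, hx, rfl⟩
    obtain ⟨e, he, hxe⟩ := hcover x hx
    exact Finset.mem_coe.2
      (Finset.mem_image.2 ⟨e, he, ((ZMod.natCast_eq_natCast_iff x e m).2 hxe).symm⟩)
  have nsmul_residues : h • residues = Finset.univ := by
    rw [← Finset.coe_eq_univ, Finset.coe_nsmul, Set.eq_univ_iff_forall]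
    exact fun c ↦ Set.nsmul_subset_nsmul_left image_subset
      (hA.nsmul_image_castAddMonoidHom_eq_univ m ▸ Set.mem_univ c)
  calc m = (h • residues).card := by rw [nsmul_residues, Finset.card_univ, ZMod.card]
    _ ≤ residues.card ^ h := Finset.card_nsmul_le
    _ ≤ (E : Set ℕ).ncard ^ h := by
      rw [Set.ncard_coe_finset]
      exact Nat.pow_le_pow_left Finset.card_image_le h

lemma prod_le_sum_ncard_add_one_pow (hA : IsBasisOfOrder A h) {ι : Type*} {s : Finset ι}
    {m : ι → ℕ} {P : ι → Set ℕ} (hm : (s : Set ι).Pairwise (Function.onFun Nat.Coprime m))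
    (hP : ∀ i ∈ s, (P i).Finite) (hdvd : ∀ i ∈ s, ∀ x ∈ A \ P i, m i ∣ x) :
    ∏ i ∈ s, m i ≤ (∑ i ∈ s, (P i).ncard + 1) ^ h := by
  have cover : ∀ x ∈ A, ∃ e ∈ insert 0 (⋃ i ∈ s, P i), x ≡ e [MOD ∏ i ∈ s, m i] := fun x hx ↦ by
    by_cases hxP : x ∈ ⋃ i ∈ s, P i
    · exact ⟨x, .inr hxP, rfl⟩
    · simp only [Set.mem_iUnion, not_exists] at hxP
      exact ⟨0, .inl rfl, Nat.modEq_zero_iff_dvd.2 (Finset.prod_dvd_of_isRelPrime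
        (fun i hi j hj hij ↦ Nat.coprime_iff_isRelPrime.1 (hm hi hj hij))
        fun i hi ↦ hdvd i hi x ⟨hx, hxP i hi⟩)⟩
  calc ∏ i ∈ s, m i ≤ (insert 0 (⋃ i ∈ s, P i)).ncard ^ h :=
        hA.modulus_le_ncard_pow ((s.finite_toSet.biUnion hP).insert 0) cover
    _ ≤ (∑ i ∈ s, (P i).ncard + 1) ^ h := by
      gcongr
      exact (Set.ncard_insert_le _ _).trans (by gcongr; exact s.set_ncard_biUnion_le P)

lemma two_pow_card_le_of_isEssentialSubset (hA : IsBasisOfOrder A h) {Ps : Finset (Set ℕ)}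
    (hPs : ∀ P ∈ Ps, IsEssentialSubset A P) (h0 : ∀ P ∈ Ps, 0 ∉ P) :
    2 ^ Ps.card ≤ (∑ P ∈ Ps, P.ncard + 1) ^ h := by
  choose! p hp hPp using fun P hP ↦
    (hPs P hP).exists_prime_eq_setOf_not_dvd ⟨h, hA⟩ (h0 P hP)
  have coprime : (Ps : Set (Set ℕ)).Pairwise (Function.onFun Nat.Coprime p) :=
    fun P hP Q hQ hPQ ↦ (Nat.coprime_primes (hp P hP) (hp Q hQ)).2 fun hpq ↦
      hPQ (by rw [hPp P hP, hPp Q hQ, hpq])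
  have dvd : ∀ P ∈ Ps, ∀ x ∈ A \ P, p P ∣ x := fun P hP x ⟨hxA, hxP⟩ ↦ by
    rw [hPp P hP] at hxP
    exact by_contra fun hpx ↦ hxP ⟨hxA, hpx⟩
  calc 2 ^ Ps.card ≤ ∏ P ∈ Ps, p P :=
        Finset.pow_card_le_prod _ _ _ fun P hP ↦ (hp P hP).two_le
    _ ≤ (∑ P ∈ Ps, P.ncard + 1) ^ h :=
      hA.prod_le_sum_ncard_add_one_pow coprime (fun P hP ↦ (hPs P hP).2) dvd

end IsBasisOfOrder

lemma eventually_mul_add_one_pow_lt_two_pow (k h : ℕ) :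
    ∀ᶠ s : ℕ in atTop, (k * s + 1) ^ h < 2 ^ s := by
  have tendsto := tendsto_pow_const_div_const_pow_of_one_lt h (one_lt_two (α := ℝ))
  have hpos : (0 : ℝ) < 1 / (k + 1) ^ h := by positivity
  filter_upwards [eventually_ge_atTop 1, tendsto.eventually_lt_const hpos] with s hs hlt
  have pow_lt : ((k + 1) * s) ^ h < 2 ^ s := by
    rw [div_lt_div_iff₀ (by positivity) (by positivity), one_mul, ← mul_pow, mul_comm] at hlt
    exact_mod_cast hlt
  calc (k * s + 1) ^ h ≤ ((k + 1) * s) ^ h := by gcongr; linarith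
    _ < 2 ^ s := pow_lt

/-- For every pair of positive integers `k` and `h`, there exists `φ(k,h)` such that every
asymptotic basis of order `h` contains at most `φ(k,h)` essential subsets of cardinality
at most `k`. -/
theorem number_of_small_essential_subsets_bounded (k h : ℕ) (hk : 0 < k) (hh : 0 < h) :
    ∃ φ : ℕ, ∀ A : Set ℕ, IsBasisOfOrder A h →
      ∀ Ps : Finset (Set ℕ), (∀ P ∈ Ps, IsEssentialSubset A P ∧ P.ncard ≤ k) →
        Ps.card ≤ φ := by
  classical
  obtain ⟨N, hN⟩ := eventually_atTop.1 (eventually_mul_add_one_pow_lt_two_pow k h)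
  refine ⟨N + 1, fun A hA Ps hPs ↦ ?_⟩
  have hPs' : ∀ P ∈ Ps.erase {0}, IsEssentialSubset A P ∧ P.ncard ≤ k :=
    fun P hP ↦ hPs P (Finset.mem_of_mem_erase hP)
  have zero_notMem : ∀ P ∈ Ps.erase {0}, 0 ∉ P := fun P hP h0 ↦
    Finset.ne_of_mem_erase hP ((hPs' P hP).1.1.eq_singleton_zero h0)
  have two_pow_le : 2 ^ (Ps.erase {0}).card ≤ (k * (Ps.erase {0}).card + 1) ^ h :=
    calc 2 ^ (Ps.erase {0}).card ≤ (∑ P ∈ Ps.erase {0}, P.ncard + 1) ^ h :=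
          hA.two_pow_card_le_of_isEssentialSubset (fun P hP ↦ (hPs' P hP).1) zero_notMem
      _ ≤ (k * (Ps.erase {0}).card + 1) ^ h := by
        gcongr
        rw [mul_comm]
        exact Finset.sum_le_card_nsmul _ _ _ fun P hP ↦ (hPs' P hP).2
  have card_erase_le : (Ps.erase {0}).card ≤ N :=
    le_of_not_ge fun hle ↦ (hN _ hle).not_ge two_pow_le
  have := Finset.pred_card_le_card_erase (s := Ps) (a := {0})
  omega
end

section
/- Let A be an asymptotic basis for ℕ₀ of some order, and let P₁ and P₂ be two distinct essential subsets of A. For i = 1,2 suppose dᵢ is the largest positive integer d such that A \ Pᵢ is contained in an arithmetic progression of common difference d. Then d₁ and d₂ are relatively prime. -/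
/-- `d` is the largest positive common difference of an arithmetic progression
containing `S`. -/
def IsLargestCommonDiff (S : Set ℕ) (d : ℕ) : Prop :=
  0 < d ∧ (∃ c : ℕ, ∀ a ∈ S, a % d = c % d) ∧
    ∀ e : ℕ, 0 < e → (∃ c : ℕ, ∀ a ∈ S, a % e = c % e) → e ≤ d

/-- `S` lies in a single residue class mod `d`, i.e. in an arithmetic progression of common
difference `d`. As `a ≡ c [MOD 0]` means `a = c`, the case `d = 0` says that `S` has at most one
element. -/
def IsCommonDiff (S : Set ℕ) (d : ℕ) : Prop := ∃ c, ∀ a ∈ S, a ≡ c [MOD d]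

section Sumset

variable {A : Set ℕ} {d h n : ℕ}

lemma finite_sumset (hA : A.Finite) (h : ℕ) : (Sumset A h).Finite := by
  obtain ⟨M, hM⟩ := hA.bddAbove
  refine (Set.finite_Iic (h * M)).subset ?_
  rintro _ ⟨l, rfl, hlA, rfl⟩
  exact List.sum_le_card_nsmul l M fun x hx => hM (hlA x hx)

lemma dvd_of_mem_sumset (hA : ∀ a ∈ A, d ∣ a) (hn : n ∈ Sumset A h) : d ∣ n := by
  obtain ⟨l, -, hlA, rfl⟩ := hn
  exact List.dvd_sum fun x hx => hA x (hlA x hx)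

lemma IsBasis.infinite (hA : IsBasis A) : A.Infinite := by
  obtain ⟨h, -, -, hcompl⟩ := hA
  exact fun hfin => (finite_sumset hfin h).infinite_compl hcompl

lemma IsBasisOfOrder.exists_mem_succ_mem (hA : IsBasisOfOrder A h) :
    ∃ n, n ∈ Sumset A h ∧ n + 1 ∈ Sumset A h := by
  obtain ⟨-, -, hcompl⟩ := hA
  obtain ⟨M, hM⟩ := hcompl.bddAbove
  have mem_of_lt : ∀ n, M < n → n ∈ Sumset A h := fun n hn =>
    not_not.1 fun hmem => hn.not_ge (hM hmem)
  exact ⟨M + 1, mem_of_lt _ (by omega), mem_of_lt _ (by omega)⟩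

end Sumset

namespace IsCommonDiff

variable {S T : Set ℕ} {d e : ℕ}

lemma of_dvd (hS : IsCommonDiff S d) (hed : e ∣ d) : IsCommonDiff S e :=
  let ⟨c, hc⟩ := hS
  ⟨c, fun a ha => (hc a ha).of_dvd hed⟩

lemma modEq (hS : IsCommonDiff S d) {a b : ℕ} (ha : a ∈ S) (hb : b ∈ S) : a ≡ b [MOD d] :=
  let ⟨_, hc⟩ := hS
  (hc a ha).trans (hc b hb).symm

lemma union (hS : IsCommonDiff S d) (hT : IsCommonDiff T d) (hST : (S ∩ T).Nonempty) :
    IsCommonDiff (S ∪ T) d := by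
  obtain ⟨b, hbS, hbT⟩ := hST
  exact ⟨b, fun a ha => ha.elim (hS.modEq · hbS) (hT.modEq · hbT)⟩

lemma not_isBasis (hS : IsCommonDiff S d) (hd : d ≠ 1) : ¬ IsBasis S := by
  rintro ⟨h, hbasis⟩
  have dvd_of_mem : ∀ a ∈ S, d ∣ a := fun a ha =>
    Nat.modEq_zero_iff_dvd.1 (hS.modEq ha hbasis.1)
  obtain ⟨n, hn, hn'⟩ := hbasis.exists_mem_succ_mem
  have dvd_one : d ∣ 1 :=
    (Nat.dvd_add_right (dvd_of_mem_sumset dvd_of_mem hn)).1 (dvd_of_mem_sumset dvd_of_mem hn')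
  exact hd (Nat.dvd_one.1 dvd_one)

end IsCommonDiff

lemma IsLargestCommonDiff.isCommonDiff {S : Set ℕ} {d : ℕ} (hd : IsLargestCommonDiff S d) :
    IsCommonDiff S d :=
  hd.2.1

lemma IsEssentiality.eq_of_not_isBasis_sdiff_inter {A P₁ P₂ : Set ℕ}
    (hP₁ : IsEssentiality A P₁) (hP₂ : IsEssentiality A P₂)
    (hinter : ¬ IsBasis (A \ (P₁ ∩ P₂))) : P₁ = P₂ :=
  calc
    P₁ = P₁ ∩ P₂ := (hP₁.2.2 _ Set.inter_subset_left hinter).symm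
    _ = P₂ := hP₂.2.2 _ Set.inter_subset_right hinter

lemma nonempty_sdiff_inter_sdiff {α : Type*} {s t u : Set α} (hs : s ⊆ u) (ht : t ⊆ u)
    (hunion : s ∪ t ≠ u) : ((u \ s) ∩ (u \ t)).Nonempty := by
  rw [Set.sdiff_inter_sdiff, Set.sdiff_nonempty]
  exact fun hsub => hunion ((Set.union_subset hs ht).antisymm hsub)

theorem essential_subsets_coprime_diffs_general {A P₁ P₂ : Set ℕ} {d₁ d₂ : ℕ}
    (hP₁ : IsEssentiality A P₁) (hP₂ : IsEssentiality A P₂)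
    (hne : P₁ ≠ P₂) (hunion : P₁ ∪ P₂ ≠ A)
    (hd₁ : IsCommonDiff (A \ P₁) d₁) (hd₂ : IsCommonDiff (A \ P₂) d₂) :
    Nat.Coprime d₁ d₂ := by
  by_contra hgcd
  have hinter : IsCommonDiff (A \ (P₁ ∩ P₂)) (d₁.gcd d₂) := by
    rw [Set.sdiff_inter]
    exact (hd₁.of_dvd (Nat.gcd_dvd_left d₁ d₂)).union (hd₂.of_dvd (Nat.gcd_dvd_right d₁ d₂))
      (nonempty_sdiff_inter_sdiff hP₁.1 hP₂.1 hunion)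
  exact hne (hP₁.eq_of_not_isBasis_sdiff_inter hP₂ (hinter.not_isBasis hgcd))

/-- If `P₁`, `P₂` are distinct essential subsets of a basis `A`, then the associated
largest common differences `d₁`, `d₂` are relatively prime. -/
theorem essential_subsets_coprime_diffs (A P₁ P₂ : Set ℕ) (d₁ d₂ : ℕ)
    (hA : IsBasis A)
    (hP₁ : IsEssentialSubset A P₁) (hP₂ : IsEssentialSubset A P₂)
    (hne : P₁ ≠ P₂)
    (hd₁ : IsLargestCommonDiff (A \ P₁) d₁)
    (hd₂ : IsLargestCommonDiff (A \ P₂) d₂) :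
    Nat.Coprime d₁ d₂ := by
  have hunion : P₁ ∪ P₂ ≠ A := fun h => hA.infinite (h ▸ hP₁.2.union hP₂.2)
  exact essential_subsets_coprime_diffs_general hP₁.1 hP₂.1 hne hunion
    hd₁.isCommonDiff hd₂.isCommonDiff
end

section
/- For every integer h ≥ 2 there exists a devolved asymptotic basis A for ℕ₀ of order h; that is, an asymptotic basis A of order h such that whenever B ⊆ A is still an asymptotic basis of some order, then for every integer d ≥ 2 and every c ∈ {0,1,…,d−1} the set B contains infinitely many elements congruent to c modulo d. -/
/-- A basis `A` is devolved if every subset `B ⊆ A` which is still a basis contains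
infinitely many elements in every congruence class `c` mod `d`, for every `d ≥ 2`. -/
def Devolved (A : Set ℕ) : Prop :=
  ∀ B ⊆ A, IsBasis B → ∀ d : ℕ, 2 ≤ d → ∀ c : ℕ, c < d →
    {b ∈ B | b % d = c}.Infinite

open Filter Set
open scoped Nat

section Sumset

variable {A B S : Set ℕ} {a b c g h k n : ℕ}

lemma mem_sumset_two : n ∈ Sumset A 2 ↔ ∃ x ∈ A, ∃ y ∈ A, x + y = n := by
  constructor
  · rintro ⟨l, hl, hlA, rfl⟩
    obtain ⟨x, y, rfl⟩ := List.length_eq_two.mp hl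
    exact ⟨x, hlA x (by simp), y, hlA y (by simp), by simp⟩
  · rintro ⟨x, hx, y, hy, rfl⟩
    exact ⟨[x, y], rfl, by simp [hx, hy], by simp⟩

lemma sumset_subset_sumset_of_le (h0 : 0 ∈ A) (hhk : h ≤ k) : Sumset A h ⊆ Sumset A k := by
  rintro _ ⟨l, rfl, hlA, rfl⟩
  refine ⟨l ++ List.replicate (k - l.length) 0, by simp [hhk], fun x hx => ?_, by simp⟩
  rcases List.mem_append.mp hx with hxl | hx0
  · exact hlA x hxl
  · exact List.eq_of_mem_replicate hx0 ▸ h0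

lemma IsBasisOfOrder.mono (hA : IsBasisOfOrder A h) (hhk : h ≤ k) : IsBasisOfOrder A k := by
  obtain ⟨h0, h1, hfin⟩ := hA
  exact ⟨h0, h1.trans hhk,
    hfin.subset (compl_subset_compl.mpr (sumset_subset_sumset_of_le h0 hhk))⟩

lemma inter_Ioc_nonempty_of_mem_sumset (hn : n ∈ Sumset A k) (hbn : k * b < n) :
    (A ∩ Ioc b n).Nonempty := by
  obtain ⟨l, rfl, hlA, rfl⟩ := hn
  obtain ⟨x, hxl, hbx⟩ : ∃ x ∈ l, b < x := by
    by_contra! hle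
    exact hbn.not_ge (List.sum_le_card_nsmul l b hle)
  exact ⟨x, hlA x hxl, hbx, List.le_sum_of_mem hxl⟩

lemma IsBasis.eventually_inter_Ioc_nonempty {ι : Type*} {l : Filter ι} {L M : ι → ℕ}
    (hB : IsBasis B) (hM : Tendsto M l atTop) (hLM : ∀ k, ∀ᶠ i in l, k * L i < M i) :
    ∀ᶠ i in l, (B ∩ Ioc (L i) (M i)).Nonempty := by
  obtain ⟨k, -, -, hfin⟩ := hB
  have hmem : ∀ᶠ n in atTop, n ∈ Sumset B k := by
    simpa [Nat.cofinite_eq_atTop] using hfin.eventually_cofinite_notMem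
  filter_upwards [hM.eventually hmem, hLM k] with i hi hlt
  exact inter_Ioc_nonempty_of_mem_sumset hi hlt

lemma Ioc_two_mul_subset_sumset_two (hA : Ioc a b ⊆ A) :
    Ioc (2 * a + 1) (2 * b) ⊆ Sumset A 2 := by
  rintro n ⟨han, hnb⟩
  exact mem_sumset_two.mpr
    ⟨n / 2, hA ⟨by omega, by omega⟩, n - n / 2, hA ⟨by omega, by omega⟩, by omega⟩

lemma Ioc_subset_sumset_two_of_syndetic (hA : Ioc a b ⊆ A) (hSA : S ∩ Ioc b c ⊆ A)
    (hS : ∀ m, (S ∩ Ico m (m + g)).Nonempty) (hg : a + g ≤ b) :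
    Ioc (2 * b) c ⊆ Sumset A 2 := by
  rintro n ⟨hbn, hnc⟩
  obtain ⟨x, hxS, hle, hlt⟩ := hS (n - b)
  exact mem_sumset_two.mpr
    ⟨n - x, hA ⟨by omega, by omega⟩, x, hSA ⟨hxS, by omega, by omega⟩, by omega⟩

end Sumset

/-- The set obtained from `ℕ` by keeping, in each interval `(L i, M i]`, only the elements of
`S i`. It is meant for pairwise disjoint intervals; on an overlap all the conditions apply. -/
def thinnedSet (L M : ℕ → ℕ) (S : ℕ → Set ℕ) : Set ℕ :=
  {x | ∀ i, x ∈ Ioc (L i) (M i) → x ∈ S i}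

section ThinnedSet

variable {L M : ℕ → ℕ} {S : ℕ → Set ℕ} {B T : Set ℕ} {i j : ℕ}

lemma zero_mem_thinnedSet : 0 ∈ thinnedSet L M S :=
  fun _ h0 => absurd h0.1 (Nat.not_lt_zero _)

lemma infinite_inter_of_subset_thinnedSet (hB : IsBasis B) (hBA : B ⊆ thinnedSet L M S)
    (hL : Tendsto L atTop atTop) (hLM : ∀ k, ∀ᶠ i in atTop, k * L i < M i)
    (hST : ∃ᶠ i in atTop, S i ⊆ T) : (B ∩ T).Infinite := by
  have hM : Tendsto M atTop atTop :=
    tendsto_atTop_mono' _ ((hLM 1).mono fun i hi => by simpa using hi.le) hL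
  refine infinite_of_forall_exists_gt fun N => ?_
  obtain ⟨i, hSTi, ⟨x, hxB, hx⟩, hNL⟩ := (hST.and_eventually
    ((hB.eventually_inter_Ioc_nonempty hM hLM).and (hL.eventually_gt_atTop N))).exists
  exact ⟨x, ⟨hxB, hSTi (hBA hxB i hx)⟩, hNL.trans hx.1⟩

lemma strictMono_lower_of_interlacing (hLM : ∀ i, L i ≤ M i) (hML : ∀ i, M i < L (i + 1)) :
    StrictMono L :=
  strictMono_nat_of_lt_succ fun i => (hLM i).trans_lt (hML i)

lemma strictMono_upper_of_interlacing (hLM : ∀ i, L i ≤ M i) (hML : ∀ i, M i < L (i + 1)) :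
    StrictMono M :=
  strictMono_nat_of_lt_succ fun i => (hML i).trans_le (hLM (i + 1))

lemma upper_lt_lower_of_interlacing (hLM : ∀ i, L i ≤ M i) (hML : ∀ i, M i < L (i + 1))
    (hij : i < j) : M i < L j :=
  (hML i).trans_le ((strictMono_lower_of_interlacing hLM hML).monotone hij)

lemma Ioc_subset_thinnedSet (hLM : ∀ i, L i ≤ M i) (hML : ∀ i, M i < L (i + 1)) :
    Ioc (M i) (L (i + 1)) ⊆ thinnedSet L M S := by
  rintro x ⟨hMx, hxL⟩ j ⟨hLx, hxM⟩
  rcases lt_or_ge i j with hij | hji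
  · exact absurd ((strictMono_lower_of_interlacing hLM hML).monotone hij)
      (hLx.trans_le hxL).not_ge
  · exact absurd ((strictMono_upper_of_interlacing hLM hML).monotone hji)
      (hMx.trans_le hxM).not_ge

lemma inter_Ioc_subset_thinnedSet (hLM : ∀ i, L i ≤ M i) (hML : ∀ i, M i < L (i + 1)) :
    S i ∩ Ioc (L i) (M i) ⊆ thinnedSet L M S := by
  rintro x ⟨hxS, hLx, hxM⟩ j ⟨hLx', hxM'⟩
  rcases lt_trichotomy i j with hij | rfl | hji
  · exact absurd (upper_lt_lower_of_interlacing hLM hML hij) (hLx'.trans_le hxM).not_gt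
  · exact hxS
  · exact absurd (upper_lt_lower_of_interlacing hLM hML hji) (hLx.trans_le hxM').not_gt

lemma isBasisOfOrder_two_thinnedSet (hLM : ∀ i, L i ≤ M i) (hML : ∀ i, 2 * M i < L (i + 1))
    (hS : ∀ i n, (S (i + 1) ∩ Ico n (n + M i)).Nonempty) :
    IsBasisOfOrder (thinnedSet L M S) 2 := by
  have hML' : ∀ i, M i < L (i + 1) := fun i => by have := hML i; omega
  refine ⟨zero_mem_thinnedSet, one_le_two, (finite_Iic (M 0)).subset fun n hn => ?_⟩
  by_contra hMn
  refine hn ?_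
  by_cases hnA : n ∈ thinnedSet L M S
  · exact mem_sumset_two.mpr ⟨0, zero_mem_thinnedSet, n, hnA, zero_add n⟩
  obtain ⟨i, hLn, hnM⟩ : ∃ i, n ∈ Ioc (L i) (M i) := by
    by_contra! hout
    exact hnA fun i hi => absurd hi (hout i)
  obtain _ | i := i
  · exact absurd hnM hMn
  have hfull : Ioc (M i) (L (i + 1)) ⊆ thinnedSet L M S := Ioc_subset_thinnedSet hLM hML'
  have hgap := hML i
  rcases le_or_gt n (2 * L (i + 1)) with hle | hlt
  · exact Ioc_two_mul_subset_sumset_two hfull ⟨by omega, hle⟩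
  · exact Ioc_subset_sumset_two_of_syndetic hfull (inter_Ioc_subset_thinnedSet hLM hML') (hS i)
      (by omega) ⟨hlt, hnM⟩

end ThinnedSet

lemma exists_modEq_mem_Ico {d : ℕ} (hd : 0 < d) (c n : ℕ) :
    ∃ x ∈ Ico n (n + d), x ≡ c [MOD d] := by
  have hc : c % d ∈ (Finset.Ico n (n + d)).image (· % d) := by
    rw [Nat.image_Ico_mod]
    exact Finset.mem_range.mpr (Nat.mod_lt c hd)
  simpa [Nat.ModEq] using hc

/-- The devolved basis of order `2`: in `((2 i + 1)!, (2 i + 2)!]` only the numbers congruent to `i`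
modulo `i !` are kept. For `d ≤ i` such a number is congruent to `i` modulo `d`, so that the single
index `i` prescribes the residues for all small moduli simultaneously. -/
def factorialThinnedSet : Set ℕ :=
  thinnedSet (fun i => (2 * i + 1)!) (fun i => (2 * i + 2)!) fun i => {x | x ≡ i [MOD i !]}

lemma isBasisOfOrder_two_factorialThinnedSet : IsBasisOfOrder factorialThinnedSet 2 := by
  refine isBasisOfOrder_two_thinnedSet (fun i => Nat.factorial_le (by omega)) (fun i => ?_)
    fun i n => ?_
  · calc 2 * (2 * i + 2)! < (2 * i + 3) * (2 * i + 2)! :=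
        Nat.mul_lt_mul_of_pos_right (by omega) (Nat.factorial_pos _)
      _ = (2 * (i + 1) + 1)! := (Nat.factorial_succ _).symm
  · obtain ⟨x, ⟨hnx, hxn⟩, hx⟩ := exists_modEq_mem_Ico (Nat.factorial_pos (i + 1)) (i + 1) n
    have hle : (i + 1)! ≤ (2 * i + 2)! := Nat.factorial_le (by omega)
    exact ⟨x, hx, hnx, by omega⟩

lemma devolved_factorialThinnedSet : Devolved factorialThinnedSet := by
  intro B hBA hB d _ c hc
  refine infinite_inter_of_subset_thinnedSet hB hBA ?_ (fun k => ?_) ?_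
  · exact tendsto_atTop_mono (fun i => (by omega : i ≤ 2 * i + 1).trans (Nat.self_le_factorial _))
      tendsto_id
  · filter_upwards [eventually_ge_atTop k] with i hi
    rw [Nat.factorial_succ (2 * i + 1)]
    exact Nat.mul_lt_mul_of_pos_right (by omega) (Nat.factorial_pos _)
  · refine ((Nat.frequently_mod_eq hc).and_eventually (eventually_ge_atTop d)).mono ?_
    rintro i ⟨hic, hdi⟩ x hx
    have hdvd : d ∣ i ! := Nat.dvd_factorial (Nat.zero_lt_of_lt hc) hdi
    have hxi : x % d = i % d := Nat.ModEq.of_dvd hdvd hx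
    exact hxi.trans hic

/-- For every `h ≥ 2` there exists a devolved asymptotic basis of order `h`. -/
theorem exists_devolved_basis (h : ℕ) (hh : 2 ≤ h) :
    ∃ A : Set ℕ, IsBasisOfOrder A h ∧ Devolved A :=
  ⟨factorialThinnedSet, isBasisOfOrder_two_factorialThinnedSet.mono hh,
    devolved_factorialThinnedSet⟩
end
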